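/- Let k be a field of characteristic 7, σ := (1,3,5,7,9,11,13)(2,4,6,8,10,12,14) and τ₁ := (1,2)(3,8,5,14,9,12)(4,7,6,13,10,11) acting on k(x₁,…,x₁₄) by permutation of variables, and G := ⟨σ, τ₁⟩, a transitive solvable subgroup of S₁₄ of order 42. Then the fixed field k(x₁,…,x₁₄)^G is purely transcendental over k. -/

import Mathlib

set_option maxHeartbeats 1000000
set_option synthInstance.maxHeartbeats 400000

/-- A field extension `F` of `k` is `k`-rational (purely transcendental over `k`)
if it is `k`-isomorphic to a rational function field in finitely many variables. -/
def IsKRational (k F : Type*) [Field k] [Field F] [Algebra k F] : Prop :=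
  ∃ n : ℕ, Nonempty (F ≃ₐ[k] FractionRing (MvPolynomial (Fin n) k))

/-!
Let `p` be the characteristic. On the sums and differences of the two orbits of `S`, indexed by
`ZMod p`, the group acts through affine maps `a ↦ c⁻¹ * a + b`, up to powers of `c`. The
barycenter `t` of one such family is sent to `t - 1` by `S` and to `c * t` by `T`, so moments about
`t` are only multiplied by powers of `c`, as is the Artin–Schreier element `θ = t ^ p - t`.
Quotients of moments by powers of `θ` are therefore invariant. The first moment of the family that
defines `t` vanishes, and the invariant `θ ^ d`, with `d` the order of `c`, takes its place.
Together with `t` these invariants generate the whole field, by Lagrange interpolation. As `t` has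
degree at most `p * d` over the field they generate, and has `p * d` conjugates under the group,
that field is the fixed field; and there are as many generators as variables, so they are
algebraically independent.
-/

open IntermediateField

section PurelyTranscendental

variable {k L κ : Type*} [Field k] [Field L] [Algebra k L]

theorem IsKRational.of_adjoin_eq [Finite κ] {g : κ → L} (hg : AlgebraicIndependent k g)
    {F : IntermediateField k L} (hF : adjoin k (Set.range g) = F) : IsKRational k F := by
  obtain ⟨n, ⟨e⟩⟩ := Finite.exists_equiv_fin κ
  have hrange : Set.range (g ∘ e.symm) = Set.range g := e.symm.surjective.range_comp g
  have hF' : F = adjoin k (Set.range (g ∘ e.symm)) := by rw [hrange, hF]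
  exact ⟨n, ⟨(equivOfEq hF').trans (hg.comp e.symm e.symm.injective).aevalEquivField.symm⟩⟩

open algebraAdjoinAdjoin in
theorem algebraicIndependent_of_isAlgebraic_adjoin [Finite κ] {x g : κ → L}
    (hx : AlgebraicIndependent k x) (hg : Algebra.IsAlgebraic (adjoin k (Set.range g)) L) :
    AlgebraicIndependent k g := by
  have halg : Algebra.IsAlgebraic (Algebra.adjoin k (Set.range g)) L :=
    (IsFractionRing.comap_isAlgebraic_iff (K := adjoin k (Set.range g))).2 hg
  exact (Algebra.IsAlgebraic.isTranscendenceBasis_of_lift_le_trdeg_of_finite k g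
    hx.lift_cardinalMk_le_trdeg).1

theorem algebraicIndependent_of_adjoin_eq_top [Finite κ] {x g : κ → L}
    (hx : AlgebraicIndependent k x) (hg : adjoin k (Set.range g) = ⊤) :
    AlgebraicIndependent k g := by
  refine algebraicIndependent_of_isAlgebraic_adjoin hx ⟨fun z => ?_⟩
  exact isAlgebraic_algebraMap (⟨z, hg ▸ mem_top⟩ : adjoin k (Set.range g))

theorem algebraicIndependent_algebraMap_X :
    AlgebraicIndependent k fun i : κ =>
      algebraMap (MvPolynomial κ k) (FractionRing (MvPolynomial κ k)) (MvPolynomial.X i) :=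
  (MvPolynomial.algebraicIndependent_X κ k).map'
    (f := IsScalarTower.toAlgHom k (MvPolynomial κ k) (FractionRing (MvPolynomial κ k)))
    (IsFractionRing.injective _ _)

theorem adjoin_range_algebraMap_X :
    adjoin k (Set.range fun i : κ =>
      algebraMap (MvPolynomial κ k) (FractionRing (MvPolynomial κ k)) (MvPolynomial.X i)) = ⊤ := by
  let ι := IsScalarTower.toAlgHom k (MvPolynomial κ k) (FractionRing (MvPolynomial κ k))
  have hι : ι.range = Algebra.adjoin k (Set.range fun i => ι (MvPolynomial.X i)) := by
    rw [← Algebra.map_top, ← MvPolynomial.adjoin_range_X, AlgHom.map_adjoin, ← Set.range_comp]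
    rfl
  have h := IsFractionRing.algHom_fieldRange_eq_of_comp_eq_of_range_eq
    (f := AlgHom.id k (FractionRing (MvPolynomial κ k))) (g := ι) rfl hι
  exact h.symm.trans (AlgHom.fieldRange_eq_top.2 Function.surjective_id)

end PurelyTranscendental

section Degree

variable {k L : Type*} [Field k] [Field L] [Algebra k L]

theorem finiteDimensional_of_adjoin_simple_eq_top {t : L} (hint : IsIntegral k t)
    (htop : k⟮t⟯ = ⊤) : FiniteDimensional k L :=
  have : FiniteDimensional k (⊤ : IntermediateField k L) := htop ▸ adjoin.finiteDimensional hint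
  topEquiv.toLinearEquiv.finiteDimensional

theorem eq_of_le_of_natDegree_minpoly_le {M F : IntermediateField k L} (hMF : M ≤ F) {t : L}
    (hint : IsIntegral M t) (htop : M⟮t⟯ = ⊤)
    (hdeg : (minpoly M t).natDegree ≤ (minpoly F t).natDegree) : M = F := by
  have hfinrank : Module.finrank M L = (minpoly M t).natDegree := by
    rw [← finrank_top', ← htop, adjoin.finrank hint]
  have : FiniteDimensional M L := finiteDimensional_of_adjoin_simple_eq_top hint htop
  let _ : Algebra M F := (inclusion hMF).toRingHom.toAlgebra
  have : IsScalarTower M F L := .of_algebraMap_eq fun _ => rfl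
  have : FiniteDimensional F L := Module.Finite.right M F L
  refine eq_of_le_of_finrank_le' hMF ?_
  calc Module.finrank M L = (minpoly M t).natDegree := hfinrank
    _ ≤ (minpoly F t).natDegree := hdeg
    _ ≤ Module.finrank F L := minpoly.natDegree_le t

theorem isIntegral_and_natDegree_minpoly_le_of_aeval_mem {M : IntermediateField k L} {t : L}
    {P : Polynomial k} (hP : P.natDegree ≠ 0) (hPt : P.aeval t ∈ M) :
    IsIntegral M t ∧ (minpoly M t).natDegree ≤ P.natDegree := by
  let Q : Polynomial M := P.map (algebraMap k M) - .C ⟨P.aeval t, hPt⟩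
  have hQdeg : Q.natDegree = P.natDegree := by
    rw [Polynomial.natDegree_sub_C, Polynomial.natDegree_map]
  have hQ0 : Q ≠ 0 := by
    rintro hQ
    exact hP (by rw [← hQdeg, hQ, Polynomial.natDegree_zero])
  have hQt : Q.aeval t = 0 := by
    simp [Q, IntermediateField.algebraMap_apply]
  refine ⟨IsAlgebraic.isIntegral ⟨Q, hQ0, hQt⟩, ?_⟩
  exact hQdeg ▸ Polynomial.natDegree_le_of_dvd (minpoly.dvd M t hQt) hQ0

theorem orbit_subset_rootSet_minpoly_fixedField {H : Subgroup (L ≃ₐ[k] L)} {t : L}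
    (ht : IsIntegral (fixedField H) t) :
    MulAction.orbit H t ⊆ (minpoly (fixedField H) t).rootSet L := by
  rintro _ ⟨h, rfl⟩
  let φ : L ≃ₐ[fixedField H] L :=
    fixingSubgroupEquiv (fixedField H) ⟨h, (le_iff_le H _).1 le_rfl h.2⟩
  refine Polynomial.mem_rootSet.2 ⟨minpoly.ne_zero ht, ?_⟩
  calc Polynomial.aeval (φ t) (minpoly (fixedField H) t)
      = φ (Polynomial.aeval t (minpoly (fixedField H) t)) :=
        Polynomial.aeval_algHom_apply φ.toAlgHom t _
    _ = 0 := by rw [minpoly.aeval, map_zero]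

theorem mem_fixedField_closure_iff {s : Set (L ≃ₐ[k] L)} {z : L} :
    z ∈ fixedField (Subgroup.closure s) ↔ ∀ φ ∈ s, φ z = z := by
  have h : Subgroup.closure s ≤ MulAction.stabilizer (L ≃ₐ[k] L) z ↔ ∀ φ ∈ s, φ z = z :=
    Subgroup.closure_le _
  rw [mem_fixedField_iff, ← h]
  rfl

end Degree

theorem mem_of_forall_sum_pow_mul_mem {k L α : Type*} [Field k] [Field L] [Algebra k L] [Fintype α]
    {N : IntermediateField k L} {v y : α → L} (hv : Function.Injective v) (hvN : ∀ a, v a ∈ N)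
    (hN : ∀ j < Fintype.card α, ∑ a, v a ^ j * y a ∈ N) (b : α) : y b ∈ N := by
  classical
  let v' : α → N := fun a => ⟨v a, hvN a⟩
  have hv' : Set.InjOn v' (Finset.univ : Finset α) := fun _ _ _ _ h => hv (congrArg Subtype.val h)
  let P := Lagrange.basis Finset.univ v' b
  have hP (a : α) : P.aeval (v a) = if a = b then (1 : L) else 0 := by
    have hcoe : P.aeval (v a) = ((P.eval (v' a) : N) : L) :=
      Polynomial.aeval_algebraMap_apply_eq_algebraMap_eval (v' a) P
    split_ifs with hab
    · rw [hcoe, hab, Lagrange.eval_basis_self hv' (Finset.mem_univ b)]; rfl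
    · rw [hcoe, Lagrange.eval_basis_of_ne (Ne.symm hab) (Finset.mem_univ a)]; rfl
  have hdeg : P.natDegree < Fintype.card α := by
    rw [Lagrange.natDegree_basis hv' (Finset.mem_univ b), Finset.card_univ]
    exact Nat.sub_lt (Fintype.card_pos_iff.2 ⟨b⟩) one_pos
  have hsum : y b = ∑ j ∈ Finset.range (Fintype.card α), (P.coeff j : L) * ∑ a, v a ^ j * y a :=
    calc y b = ∑ a, P.aeval (v a) * y a := by simp [hP]
      _ = ∑ a, ∑ j ∈ Finset.range (Fintype.card α), (P.coeff j : L) * (v a ^ j * y a) := by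
        refine Finset.sum_congr rfl fun a _ => ?_
        simp only [Polynomial.aeval_eq_sum_range' hdeg, Finset.sum_mul, Algebra.smul_def,
          IntermediateField.algebraMap_apply, mul_assoc]
      _ = _ := by simp only [Finset.sum_comm (s := Finset.univ), Finset.mul_sum]
  rw [hsum]
  exact sum_mem fun j hj => mul_mem (P.coeff j).2 (hN j (Finset.mem_range.1 hj))

theorem sum_ne_zero_of_linearIndependent {R V α : Type*} [Ring R] [Nontrivial R] [AddCommGroup V]
    [Module R V] [Fintype α] [Nonempty α] {v : α → V} (hv : LinearIndependent R v) :
    ∑ a, v a ≠ 0 := fun h =>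
  one_ne_zero <| Fintype.linearIndependent_iff.1 hv (fun _ => 1)
    (by simpa only [one_smul] using h) (Classical.arbitrary α)

theorem zmod_cast_mem {k L : Type*} [Field k] [Field L] [Algebra k L] {p : ℕ} [NeZero p]
    (N : IntermediateField k L) (a : ZMod p) : (a.cast : L) ∈ N :=
  ZMod.natCast_val (R := L) a ▸ IntermediateField.natCast_mem N a.val

section PrimeField

variable {p : ℕ} {Φ L : Type*} [Field L] [CharP L p] [FunLike Φ L L] [RingHomClass Φ L L]

theorem map_zmod_cast (φ : Φ) (a : ZMod p) : φ (a.cast : L) = a.cast :=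
  RingHom.congr_fun
    (RingHom.ext_zmod ((φ : L →+* L).comp (ZMod.castHom dvd_rfl L)) (ZMod.castHom dvd_rfl L)) a

variable [Fact p.Prime]

theorem map_eq_self_of_pow_char_eq_self (φ : Φ) {t : L} (ht : t ^ p = t) : φ t = t := by
  have hbot : (⊥ : Subfield L) ≤ (φ : L →+* L).eqLocusField (RingHom.id L) := bot_le
  exact hbot ((Subfield.mem_bot_iff_pow_eq_self L p).2 ht)

theorem zmod_cast_units_ne_zero (c : (ZMod p)ˣ) : (c.val.cast : L) ≠ 0 :=
  (map_ne_zero (ZMod.castHom dvd_rfl L)).2 c.ne_zero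

theorem pow_char_sub_self_affine (c b : ZMod p) (t : L) :
    (c.cast * (t - b.cast)) ^ p - c.cast * (t - b.cast) = c.cast * (t ^ p - t) := by
  have hpow (a : ZMod p) : (a.cast : L) ^ p = a.cast := by rw [← ZMod.cast_pow', ZMod.pow_card]
  rw [mul_pow, sub_pow_char, hpow, hpow]
  ring

theorem injective_units_mul_sub_zmod {t : L} (ht : t ^ p - t ≠ 0) :
    Function.Injective fun q : (ZMod p)ˣ × ZMod p => q.1.val.cast * (t - q.2.cast) := by
  have hcast : Function.Injective fun a : ZMod p => (a.cast : L) := ZMod.castHom_injective L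
  rintro ⟨c, b⟩ ⟨c', b'⟩ (h : c.val.cast * (t - b.cast) = c'.val.cast * (t - b'.cast))
  have hc : c = c' := by
    have hθ := congrArg (fun u => u ^ p - u) h
    simp only [pow_char_sub_self_affine] at hθ
    exact Units.ext (hcast (mul_right_cancel₀ ht hθ))
  subst hc
  exact Prod.ext rfl (hcast (sub_right_injective (mul_left_cancel₀ (zmod_cast_units_ne_zero c) h)))

end PrimeField

section AffineOrbit

variable {p : ℕ} [Fact p.Prime] {k L : Type*} [Field k] [Field L] [Algebra k L] [CharP L p]
  {S T : L ≃ₐ[k] L} {t : L} {c : (ZMod p)ˣ}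

theorem units_mul_sub_mem_orbit_closure (hS : S t = t - 1) (hT : T t = c.val.cast * t)
    (m n : ℕ) :
    (c ^ m).val.cast * (t - n) ∈ MulAction.orbit (Subgroup.closure {S, T}) t := by
  have hTm : (T ^ m) t = (c ^ m).val.cast * t := by
    induction m with
    | zero => simp
    | succ m ih =>
      rw [pow_succ', AlgEquiv.mul_apply, ih, map_mul, map_zmod_cast, hT, pow_succ]
      push_cast [ZMod.cast_mul']
      ring
  have hSn : (S ^ n) t = t - n := by
    induction n with
    | zero => simp
    | succ n ih =>
      rw [pow_succ', AlgEquiv.mul_apply, ih, map_sub, map_natCast, hS, Nat.cast_succ]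
      ring
  have hmem : S ^ n * T ^ m ∈ Subgroup.closure {S, T} :=
    mul_mem (pow_mem (Subgroup.subset_closure (by simp)) n)
      (pow_mem (Subgroup.subset_closure (by simp)) m)
  refine ⟨⟨_, hmem⟩, ?_⟩
  change (S ^ n * T ^ m) t = _
  rw [AlgEquiv.mul_apply, hTm, map_mul, map_zmod_cast, hSn]

theorem pow_char_sub_self_ne_zero (hS : S t = t - 1) : t ^ p - t ≠ 0 := fun h =>
  one_ne_zero (sub_eq_self.1 (hS.symm.trans
    (map_eq_self_of_pow_char_eq_self (p := p) S (sub_eq_zero.1 h))))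

theorem mul_orderOf_le_natDegree_minpoly (hS : S t = t - 1) (hT : T t = c.val.cast * t)
    (hint : IsIntegral (fixedField (Subgroup.closure {S, T})) t) :
    p * orderOf c ≤ (minpoly (fixedField (Subgroup.closure {S, T})) t).natDegree := by
  set F := fixedField (Subgroup.closure {S, T})
  let f : (ZMod p)ˣ × ZMod p → L := fun q => q.1.val.cast * (t - q.2.cast)
  let A : Set ((ZMod p)ˣ × ZMod p) := (Subgroup.zpowers c : Set (ZMod p)ˣ) ×ˢ Set.univ
  have hsub : f '' A ⊆ (minpoly F t).rootSet L := by
    rintro _ ⟨⟨c', b⟩, ⟨hc', -⟩, rfl⟩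
    obtain ⟨m, rfl⟩ := mem_powers_iff_mem_zpowers.2 hc'
    have := units_mul_sub_mem_orbit_closure hS hT m b.val
    rw [ZMod.natCast_val] at this
    exact orbit_subset_rootSet_minpoly_fixedField hint this
  calc p * orderOf c = A.ncard := by
        rw [Set.ncard_prod, Set.ncard_univ, Nat.card_zmod, ← Nat.card_zpowers, mul_comm]; rfl
    _ = (f '' A).ncard :=
        (Set.ncard_image_of_injective A
          (injective_units_mul_sub_zmod (pow_char_sub_self_ne_zero hS))).symm
    _ ≤ ((minpoly F t).rootSet L).ncard := Set.ncard_le_ncard hsub (Polynomial.rootSet_finite _ _)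
    _ ≤ (minpoly F t).natDegree := Polynomial.ncard_rootSet_le _ _

end AffineOrbit

section Moments

variable {p : ℕ} [Fact p.Prime] {L : Type*} [Field L]

/-- The `j`-th moment `∑ a, (a - u) ^ j * y a` about the point `u` of the mass distribution `y` on
the prime field, whose elements are read in `L` through `ZMod.cast`. -/
def shiftedMoment (u : L) (y : ZMod p → L) (j : ℕ) : L :=
  ∑ a : ZMod p, (a.cast - u) ^ j * y a

/-- The centre of mass of the mass distribution `y` on the prime field; it is the point about which
the first moment vanishes, and has the junk value `0` when the total mass is zero. -/
def barycenter (y : ZMod p → L) : L :=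
  shiftedMoment 0 y 1 / shiftedMoment 0 y 0

theorem shiftedMoment_zero (u : L) (y : ZMod p → L) : shiftedMoment u y 0 = ∑ a, y a := by
  simp only [shiftedMoment, pow_zero, one_mul]

theorem shiftedMoment_one (u : L) (y : ZMod p → L) :
    shiftedMoment u y 1 = shiftedMoment 0 y 1 - u * shiftedMoment 0 y 0 := by
  simp only [shiftedMoment, pow_zero, pow_one, one_mul, sub_zero, sub_mul,
    Finset.sum_sub_distrib, Finset.mul_sum]

theorem shiftedMoment_barycenter_one {y : ZMod p → L} (hy : ∑ a, y a ≠ 0) :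
    shiftedMoment (barycenter y) y 1 = 0 := by
  rw [← shiftedMoment_zero 0] at hy
  rw [shiftedMoment_one, barycenter, div_mul_cancel₀ _ hy, sub_self]

variable [CharP L p] {Φ : Type*} [FunLike Φ L L] [RingHomClass Φ L L] {φ : Φ} {c : (ZMod p)ˣ}
  {b : ZMod p} {ε : L} {y : ZMod p → L}

theorem map_shiftedMoment (hy : ∀ a, φ (y a) = ε * y (c⁻¹.val * a + b)) {u u' : L}
    (hu : φ u = c.val.cast * (u' - b.cast)) (j : ℕ) :
    φ (shiftedMoment u y j) = ε * c.val.cast ^ j * shiftedMoment u' y j := by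
  let e : ZMod p ≃ ZMod p := (Units.mulLeft c⁻¹).trans (Equiv.addRight b)
  have he (a : ZMod p) : (a.cast : L) - φ u = c.val.cast * ((e a).cast - u') := by
    have hce : c.val * e a = a + c.val * b := by
      change c.val * (c⁻¹.val * a + b) = _
      rw [mul_add, Units.mul_inv_cancel_left]
    have hce' : (c.val.cast * (e a).cast : L) = a.cast + c.val.cast * b.cast := by
      rw [← ZMod.cast_mul', hce, ZMod.cast_add', ZMod.cast_mul']
    rw [hu, mul_sub, mul_sub, hce']
    ring
  calc φ (shiftedMoment u y j)
      = ∑ a, (a.cast - φ u) ^ j * (ε * y (e a)) := by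
        simp only [shiftedMoment, map_sum, map_mul, map_pow, map_sub, map_zmod_cast, hy]
        rfl
    _ = ∑ a, ε * c.val.cast ^ j * (((e a).cast - u') ^ j * y (e a)) := by
        refine Finset.sum_congr rfl fun a _ => ?_
        rw [he, mul_pow]
        ring
    _ = ∑ a : ZMod p, ε * c.val.cast ^ j * ((a.cast - u') ^ j * y a) :=
        e.sum_comp fun a => ε * c.val.cast ^ j * ((a.cast - u') ^ j * y a)
    _ = _ := (Finset.mul_sum _ _ _).symm

theorem map_barycenter (hε : ε ≠ 0) (hy : ∀ a, φ (y a) = ε * y (c⁻¹.val * a + b))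
    (hy0 : ∑ a, y a ≠ 0) : φ (barycenter y) = c.val.cast * (barycenter y - b.cast) := by
  have h0 : φ 0 = c.val.cast * ((b.cast : L) - b.cast) := by rw [map_zero, sub_self, mul_zero]
  rw [← shiftedMoment_zero 0] at hy0
  have hc : shiftedMoment (b.cast : L) y 0 = shiftedMoment 0 y 0 := by
    rw [shiftedMoment_zero, shiftedMoment_zero]
  rw [barycenter, map_div₀, map_shiftedMoment hy h0, map_shiftedMoment hy h0, shiftedMoment_one, hc]
  field_simp

end Moments

section AffineAction

variable {p : ℕ} [Fact p.Prime] {ι L : Type*} [Field L]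

/-- `φ` permutes each family `y i`, indexed by the prime field, through the affine map
`a ↦ c⁻¹ * a + b`, up to the factor `c ^ e i`. The inverse makes a barycenter `t` transform as
`t ↦ c * (t - b)`. -/
def ActsAffinely {Φ : Type*} [FunLike Φ L L] (φ : Φ) (c : (ZMod p)ˣ) (b : ZMod p) (e : ι → ℕ)
    (y : ι → ZMod p → L) : Prop :=
  ∀ i a, φ (y i a) = c.val.cast ^ e i * y i (c⁻¹.val * a + b)

/-- The generators of the fixed field attached to the families `y`: moments about the barycenter `t`
of `y i₀`, made invariant by powers of the Artin–Schreier element `t ^ p - t`. The slot `(i₀, 1)`,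
whose moment vanishes, holds `(t ^ p - t) ^ d` instead. -/
def invariantFamily [DecidableEq ι] (e : ι → ℕ) (y : ι → ZMod p → L) (i₀ : ι) (d : ℕ) :
    ι × ZMod p → L :=
  let t := barycenter (y i₀)
  Function.update
    (fun q => shiftedMoment t (y q.1) q.2.val / (t ^ p - t) ^ (q.2.val + e q.1))
    (i₀, 1) ((t ^ p - t) ^ d)

variable {e : ι → ℕ} {y : ι → ZMod p → L} {i₀ : ι} {d : ℕ}

namespace ActsAffinely

variable [CharP L p] {Φ : Type*} [FunLike Φ L L] [RingHomClass Φ L L] {φ : Φ} {c : (ZMod p)ˣ}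
  {b : ZMod p}

theorem map_barycenter (hφ : ActsAffinely φ c b e y) (hy : ∑ a, y i₀ a ≠ 0) :
    φ (barycenter (y i₀)) = c.val.cast * (barycenter (y i₀) - b.cast) :=
  _root_.map_barycenter (pow_ne_zero _ (zmod_cast_units_ne_zero c)) (hφ i₀) hy

theorem map_invariantFamily [DecidableEq ι] (hφ : ActsAffinely φ c b e y)
    (hy : ∑ a, y i₀ a ≠ 0) (hc : c ^ d = 1) (q : ι × ZMod p) :
    φ (invariantFamily e y i₀ d q) = invariantFamily e y i₀ d q := by
  have hc0 : (c.val.cast : L) ≠ 0 := zmod_cast_units_ne_zero c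
  have hcd : (c.val.cast : L) ^ d = 1 := by
    rw [← ZMod.cast_pow', ← Units.val_pow_eq_pow_val, hc, Units.val_one, ZMod.cast_one']
  have ht := hφ.map_barycenter hy
  simp only [invariantFamily]
  set t := barycenter (y i₀)
  have hθ : φ (t ^ p - t) = c.val.cast * (t ^ p - t) := by
    rw [map_sub, map_pow, ht, pow_char_sub_self_affine]
  by_cases hq : q = (i₀, 1)
  · rw [hq, Function.update_self, map_pow, hθ, mul_pow, hcd, one_mul]
  · rw [Function.update_of_ne hq, map_div₀, map_pow, hθ, map_shiftedMoment (hφ q.1) ht, mul_pow,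
      ← pow_add, add_comm (e q.1), mul_div_mul_left _ _ (pow_ne_zero _ hc0)]

end ActsAffinely

theorem mem_of_invariantFamily_mem [CharP L p] [DecidableEq ι] {k : Type*} [Field k] [Algebra k L]
    {N : IntermediateField k L} (hy : ∑ a, y i₀ a ≠ 0)
    (hθ : barycenter (y i₀) ^ p - barycenter (y i₀) ≠ 0) (ht : barycenter (y i₀) ∈ N)
    (hN : ∀ q, invariantFamily e y i₀ d q ∈ N) (i : ι) (a : ZMod p) : y i a ∈ N := by
  set t := barycenter (y i₀) with ht_def
  have hcast : Function.Injective fun a : ZMod p => (a.cast : L) := ZMod.castHom_injective L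
  refine mem_of_forall_sum_pow_mul_mem (v := fun a : ZMod p => a.cast - t)
    ((sub_left_injective (b := t)).comp hcast) (fun a => sub_mem (zmod_cast_mem N a) ht)
    (fun j hj => ?_) a
  rw [ZMod.card] at hj
  change shiftedMoment t (y i) j ∈ N
  have hval : (j : ZMod p).val = j := ZMod.val_natCast_of_lt hj
  by_cases hq : (i, (j : ZMod p)) = (i₀, 1)
  · have hi : i = i₀ := congrArg Prod.fst hq
    have hj1 : (j : ZMod p) = 1 := congrArg Prod.snd hq
    rw [hi, ← hval, hj1, ZMod.val_one, shiftedMoment_barycenter_one hy]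
    exact zero_mem N
  · have hmem := hN (i, (j : ZMod p))
    rw [invariantFamily, Function.update_of_ne hq, hval, ← ht_def] at hmem
    have hθN := pow_mem (sub_mem (pow_mem ht p) ht) (j + e i)
    exact div_mul_cancel₀ (shiftedMoment t (y i) j) (pow_ne_zero _ hθ) ▸ mul_mem hmem hθN

end AffineAction

section FixedField

variable {p : ℕ} [Fact p.Prime] {k L ι : Type*} [Field k] [Field L] [Algebra k L] [CharP L p]
  {e : ι → ℕ} {y : ι → ZMod p → L}

theorem adjoin_invariantFamily_le_fixedField [DecidableEq ι] {S T : L ≃ₐ[k] L} {c c' : (ZMod p)ˣ}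
    {b b' : ZMod p} {i₀ : ι} {d : ℕ} (hS : ActsAffinely S c b e y)
    (hT : ActsAffinely T c' b' e y) (hy : ∑ a, y i₀ a ≠ 0) (hc : c ^ d = 1) (hc' : c' ^ d = 1) :
    adjoin k (Set.range (invariantFamily e y i₀ d)) ≤ fixedField (Subgroup.closure {S, T}) := by
  rw [adjoin_le_iff]
  rintro _ ⟨q, rfl⟩
  refine mem_fixedField_closure_iff.2 ?_
  rintro φ (rfl | rfl)
  · exact hS.map_invariantFamily hy hc q
  · exact hT.map_invariantFamily hy hc' q

theorem adjoin_barycenter_eq_top [DecidableEq ι]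
    (hgen : adjoin k (Set.range (Function.uncurry y)) = ⊤) {M : IntermediateField k L} {i₀ : ι}
    {d : ℕ} (hy : ∑ a, y i₀ a ≠ 0) (hθ : barycenter (y i₀) ^ p - barycenter (y i₀) ≠ 0)
    (hM : ∀ q, invariantFamily e y i₀ d q ∈ M) : M⟮barycenter (y i₀)⟯ = ⊤ := by
  let N := restrictScalars k M⟮barycenter (y i₀)⟯
  have hMN : M ≤ N := fun z hz =>
    IntermediateField.algebraMap_mem M⟮barycenter (y i₀)⟯ (⟨z, hz⟩ : M)
  have htN : barycenter (y i₀) ∈ N := mem_adjoin_simple_self M _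
  have hyN : adjoin k (Set.range (Function.uncurry y)) ≤ N := by
    rw [adjoin_le_iff]
    rintro _ ⟨⟨i, a⟩, rfl⟩
    exact mem_of_invariantFamily_mem hy hθ htN (fun q => hMN (hM q)) i a
  exact restrictScalars_eq_top_iff.1 (top_le_iff.1 (hgen ▸ hyN))

open Polynomial in
theorem isKRational_fixedField_of_actsAffinely [Finite ι] [Nonempty ι]
    (hy : AlgebraicIndependent k (Function.uncurry y))
    (hgen : adjoin k (Set.range (Function.uncurry y)) = ⊤) {S T : L ≃ₐ[k] L} {c : (ZMod p)ˣ}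
    (hS : ActsAffinely S 1 1 e y) (hT : ActsAffinely T c 0 e y) :
    IsKRational k (fixedField (Subgroup.closure {S, T})) := by
  classical
  let i₀ : ι := Classical.arbitrary ι
  have hy0 : ∑ a, y i₀ a ≠ 0 :=
    sum_ne_zero_of_linearIndependent (hy.comp _ (Prod.mk_right_injective i₀)).linearIndependent
  set F := fixedField (Subgroup.closure {S, T})
  let t := barycenter (y i₀)
  have hSt : S t = t - 1 := by simpa [ZMod.cast_one'] using hS.map_barycenter hy0
  have hTt : T t = c.val.cast * t := by simpa using hT.map_barycenter hy0
  let d := orderOf c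
  let g := invariantFamily e y i₀ d
  let M := adjoin k (Set.range g)
  have hgM (q) : g q ∈ M := subset_adjoin k _ ⟨q, rfl⟩
  have hMF : M ≤ F :=
    adjoin_invariantFamily_le_fixedField hS hT hy0 (one_pow d) (pow_orderOf_eq_one c)
  have htop : M⟮t⟯ = ⊤ := adjoin_barycenter_eq_top hgen hy0 (pow_char_sub_self_ne_zero hSt) hgM
  have hPdeg : ((X ^ p - X) ^ d : k[X]).natDegree = p * d := by
    rw [natDegree_pow, FiniteField.X_pow_card_sub_X_natDegree_eq k (Fact.out : p.Prime).one_lt,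
      mul_comm]
  have hPt : aeval t ((X ^ p - X) ^ d : k[X]) ∈ M := by
    have hslot := hgM (i₀, 1)
    simp only [g, invariantFamily, Function.update_self] at hslot
    simpa only [map_pow, map_sub, aeval_X] using hslot
  have hP0 : ((X ^ p - X) ^ d : k[X]).natDegree ≠ 0 :=
    hPdeg ▸ mul_ne_zero (NeZero.ne p) (orderOf_pos c).ne'
  obtain ⟨hint, hdeg⟩ := isIntegral_and_natDegree_minpoly_le_of_aeval_mem hP0 hPt
  have hMF' : M = F := eq_of_le_of_natDegree_minpoly_le hMF hint htop <|
    (hdeg.trans_eq hPdeg).trans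
      (mul_orderOf_le_natDegree_minpoly hSt hTt
        (isIntegral_and_natDegree_minpoly_le_of_aeval_mem hP0 (hMF hPt)).1)
  have : FiniteDimensional M L := finiteDimensional_of_adjoin_simple_eq_top hint htop
  exact .of_adjoin_eq (algebraicIndependent_of_isAlgebraic_adjoin hy inferInstance) hMF'

end FixedField

section Swap

/-- The sum and the difference of two families: the eigenvectors of the exchange of the two. -/
def sumDiff {α L : Type*} [Field L] (x : Fin 2 × α → L) : Fin 2 → α → L :=
  ![fun a => x (0, a) + x (1, a), fun a => x (0, a) - x (1, a)]

theorem adjoin_range_uncurry_sumDiff {k L α : Type*} [Field k] [Field L] [Algebra k L]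
    (h2 : (2 : k) ≠ 0) {x : Fin 2 × α → L} (hx : adjoin k (Set.range x) = ⊤) :
    adjoin k (Set.range (Function.uncurry (sumDiff x))) = ⊤ := by
  set M := adjoin k (Set.range (Function.uncurry (sumDiff x)))
  have hM (b : Fin 2) (a : α) : sumDiff x b a ∈ M := subset_adjoin k _ ⟨(b, a), rfl⟩
  have h2L : (2 : L) ≠ 0 := by
    simpa only [map_ofNat] using (map_ne_zero (algebraMap k L)).2 h2
  have hx0 (a : α) : x (0, a) = (sumDiff x 0 a + sumDiff x 1 a) / 2 := by
    simp only [sumDiff, Matrix.cons_val_zero, Matrix.cons_val_one]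
    field_simp
    ring
  have hx1 (a : α) : x (1, a) = (sumDiff x 0 a - sumDiff x 1 a) / 2 := by
    simp only [sumDiff, Matrix.cons_val_zero, Matrix.cons_val_one]
    field_simp
    ring
  rw [← top_le_iff, ← hx, adjoin_le_iff]
  rintro _ ⟨⟨b, a⟩, rfl⟩
  have h2M : (2 : L) ∈ M := ofNat_mem M 2
  fin_cases b
  · exact hx0 a ▸ div_mem (add_mem (hM 0 a) (hM 1 a)) h2M
  · exact hx1 a ▸ div_mem (sub_mem (hM 0 a) (hM 1 a)) h2M

variable {p : ℕ} [Fact p.Prime] {L Φ : Type*} [Field L] [CharP L p] [FunLike Φ L L]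
  [RingHomClass Φ L L] {φ : Φ} {x : Fin 2 × ZMod p → L}

theorem actsAffinely_sumDiff_of_translation (hφ : ∀ b a, φ (x (b, a)) = x (b, a + 1))
    (e : Fin 2 → ℕ) : ActsAffinely φ 1 1 e (sumDiff x) := by
  intro i a
  fin_cases i <;> simp [sumDiff, hφ]

theorem actsAffinely_sumDiff_of_swap {r : (ZMod p)ˣ} {m : ℕ} (hr : r ^ m = -1)
    (hφ : ∀ b a, φ (x (b, a)) = x (b + 1, r * a)) :
    ActsAffinely φ r⁻¹ 0 ![0, m] (sumDiff x) := by
  have hrm : (r⁻¹.val.cast : L) ^ m = -1 := by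
    rw [← ZMod.cast_pow', ← Units.val_pow_eq_pow_val, inv_pow, hr, inv_neg, inv_one,
      Units.val_neg, Units.val_one, ← map_one (ZMod.castHom dvd_rfl L), ← ZMod.castHom_apply,
      map_neg]
  refine Fin.forall_fin_two.2 ⟨fun a => ?_, fun a => ?_⟩
  · change φ (x (0, a) + x (1, a)) = r⁻¹.val.cast ^ 0 * (x (0, _) + x (1, _))
    rw [map_add, hφ, hφ, inv_inv, add_zero, pow_zero, one_mul]
    exact add_comm _ _
  · change φ (x (0, a) - x (1, a)) = r⁻¹.val.cast ^ m * (x (0, _) - x (1, _))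
    rw [map_sub, hφ, hφ, inv_inv, add_zero, hrm, neg_one_mul, neg_sub]
    rfl

end Swap

theorem stmt18_general {p : ℕ} [Fact p.Prime] (hp : p ≠ 2) (k : Type*) [Field k] [CharP k p]
    {ι : Type*} (x : ι → FractionRing (MvPolynomial ι k))
    (hx : ∀ i, x i = algebraMap (MvPolynomial ι k) (FractionRing (MvPolynomial ι k))
      (MvPolynomial.X i))
    (S T : FractionRing (MvPolynomial ι k) ≃ₐ[k] FractionRing (MvPolynomial ι k))
    (e : Fin 2 × ZMod p ≃ ι) {r : (ZMod p)ˣ} {m : ℕ} (hr : r ^ m = -1)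
    (hS : ∀ b a, S (x (e (b, a))) = x (e (b, a + 1)))
    (hT : ∀ b a, T (x (e (b, a))) = x (e (b + 1, r * a))) :
    IsKRational k (fixedField (Subgroup.closure {S, T})) := by
  obtain rfl : x = _ := funext hx
  set L := FractionRing (MvPolynomial ι k)
  have : CharP L p := charP_of_injective_algebraMap (algebraMap k L).injective p
  have h2 : (2 : k) ≠ 0 := Ring.two_ne_zero (by rwa [ringChar.eq k p])
  let x : ι → L := fun i => algebraMap (MvPolynomial ι k) L (MvPolynomial.X i)
  have hgen : adjoin k (Set.range (Function.uncurry (sumDiff (x ∘ e)))) = ⊤ :=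
    adjoin_range_uncurry_sumDiff h2 (by rw [e.surjective.range_comp, adjoin_range_algebraMap_X])
  have hind : AlgebraicIndependent k (Function.uncurry (sumDiff (x ∘ e))) :=
    algebraicIndependent_of_adjoin_eq_top
      (algebraicIndependent_algebraMap_X.comp e e.injective) hgen
  exact isKRational_fixedField_of_actsAffinely hind hgen
    (actsAffinely_sumDiff_of_translation hS _) (actsAffinely_sumDiff_of_swap hr hT)

/-- The numbering of the variables by parity and half, `(b, a) ↦ b + 2 * a`: the two orbits of
`i ↦ i + 2` on `Fin 14` are the copies of `ZMod 7` with `b = 0` and `b = 1`. -/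
def interleave : Fin 2 × ZMod 7 ≃ Fin 14 :=
  (Equiv.prodComm (Fin 2) (Fin 7)).trans finProdFinEquiv

theorem interleave_add_two :
    ∀ (b : Fin 2) (a : ZMod 7), interleave (b, a) + 2 = interleave (b, a + 1) := by
  decide

theorem swap_interleave : ∀ (b : Fin 2) (a : ZMod 7),
    (![1, 0, 7, 6, 13, 12, 5, 4, 11, 10, 3, 2, 9, 8] : Fin 14 → Fin 14) (interleave (b, a)) =
      interleave (b + 1, 3 * a) := by
  decide

/-- `char k = 7`; with `σ = (1,3,5,…,13)(2,4,…,14)` (i.e. `i ↦ i+2`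
on 0-indexed `Fin 14`) and `τ₁ = (1,2)(3,8,5,14,9,12)(4,7,6,13,10,11)` acting on
`k(x₁,…,x₁₄)` by permuting variables, and `G := ⟨σ, τ₁⟩` (a transitive solvable
subgroup of `S₁₄` of order 42), the fixed field `k(x₁,…,x₁₄)^G` is purely
transcendental over `k`. -/
theorem stmt18 (k : Type*) [Field k] [CharP k 7]
    (x : Fin 14 → FractionRing (MvPolynomial (Fin 14) k))
    (hx : ∀ i, x i = algebraMap (MvPolynomial (Fin 14) k)
      (FractionRing (MvPolynomial (Fin 14) k)) (MvPolynomial.X i))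
    (S T : FractionRing (MvPolynomial (Fin 14) k) ≃ₐ[k]
           FractionRing (MvPolynomial (Fin 14) k))
    (hS : ∀ i : Fin 14, S (x i) = x (i + 2))
    (hT : ∀ i : Fin 14,
      T (x i) = x (![1, 0, 7, 6, 13, 12, 5, 4, 11, 10, 3, 2, 9, 8] i)) :
    IsKRational k (IntermediateField.fixedField (Subgroup.closure {S, T})) := by
  have : Fact (Nat.Prime 7) := ⟨by norm_num⟩
  exact stmt18_general (r := ⟨3, 5, rfl, rfl⟩) (m := 3) (by norm_num) k x hx S T interleave
    (Units.ext rfl) (fun b a => by rw [hS, interleave_add_two])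
    (fun b a => by rw [hT, swap_interleave])
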